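/- Let G ⊆ ℝ^d be open and f ∈ L¹_loc(G) a locally integrable function satisfying ∫_G f(y) Δφ(y) dy = 0 for all φ ∈ C_c^∞(G). Then there exists a harmonic function f̃ ∈ C^∞(G) with f = f̃ λ^d-a.e. on G (Weyl's lemma). -/

import Mathlib

open MeasureTheory Set

/-- The Euclidean Laplacian, as the sum of pure second derivatives. -/
noncomputable def euclLaplacian {d : ℕ} (f : EuclideanSpace ℝ (Fin d) → ℝ)
    (x : EuclideanSpace ℝ (Fin d)) : ℝ :=
  ∑ i : Fin d, iteratedFDeriv ℝ 2 f x ![EuclideanSpace.single i 1, EuclideanSpace.single i 1]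

open ContinuousLinearMap Filter Function Metric
open Module (finrank)
open scoped ContDiff Convolution InnerProductSpace Laplacian Topology

/-! If `∇Ψ x = k x • x` with `Ψ` compactly supported, as happens for every radial bump `k`, then the
dilations `kₐ x = a ^ d • k (a • x)` satisfy `d/da kₐ = a⁻¹ ^ 3 • Δ Ψₐ`. Hence for weakly harmonic
`f` the convolution `(f ⋆ kₐ) x` does not depend on `a`, as soon as `a⁻¹` is smaller than the
distance from `x` to the complement of the domain. By Lebesgue differentiation its value is `f x`
for almost every `x`, while `f ⋆ kₐ` is smooth, with Laplacian `f ⋆ Δ kₐ = 0`. -/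

section Laplacian

variable {E F : Type*} [NormedAddCommGroup E] [InnerProductSpace ℝ E] [FiniteDimensional ℝ E]
  [NormedAddCommGroup F] [NormedSpace ℝ F]

lemma laplacian_eq_sum_fderiv_fderiv_apply {ι : Type*} [Fintype ι] (v : OrthonormalBasis ι ℝ E)
    {f : E → F} {x : E} (hf : ContDiffAt ℝ 2 f x) :
    Δ f x = ∑ i, fderiv ℝ (fun y ↦ fderiv ℝ f y (v i)) x (v i) := by
  have hf' : DifferentiableAt ℝ (fderiv ℝ f) x :=
    (hf.fderiv_right (m := 1) (by norm_num)).differentiableAt one_ne_zero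
  simp [InnerProductSpace.laplacian_eq_iteratedFDeriv_orthonormalBasis f v,
    iteratedFDeriv_two_apply, fderiv_clm_apply hf' (differentiableAt_const _)]

lemma laplacian_comp_const_add_smul {f : E → F} (hf : ContDiff ℝ 2 f) (a : ℝ) (b x : E) :
    Δ (fun y ↦ f (b + a • y)) x = a ^ 2 • Δ f (b + a • x) := by
  have hshift : ContDiff ℝ 2 fun y ↦ f (b + y) := hf.comp (contDiff_const.add contDiff_id)
  simp only [InnerProductSpace.laplacian_eq_iteratedFDeriv_stdOrthonormalBasis, Finset.smul_sum,
    iteratedFDeriv_comp_const_smul a hshift, iteratedFDeriv_comp_add_left, smul_apply]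

lemma support_laplacian_subset (f : E → F) : support (Δ f) ⊆ tsupport f := by
  refine Subset.trans ?_ (support_iteratedFDeriv_subset (𝕜 := ℝ) (f := f) 2)
  exact support_subset_iff'.2 fun x hx ↦ by
    simp [InnerProductSpace.laplacian_eq_iteratedFDeriv_stdOrthonormalBasis,
      notMem_support.1 hx]

-- The Laplacian is the divergence of the gradient, here the vector field `y ↦ k y • y`.
lemma laplacian_of_hasFDerivAt_smul_innerSL {Ψ k : E → ℝ} (hΨ : ContDiff ℝ 2 Ψ)
    (hΨk : ∀ y, HasFDerivAt Ψ (k y • innerSL ℝ y) y) {x : E} (hk : DifferentiableAt ℝ k x) :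
    Δ Ψ x = finrank ℝ E * k x + fderiv ℝ k x x := by
  set v := stdOrthonormalBasis ℝ E
  have hsummand (i : Fin (finrank ℝ E)) :
      fderiv ℝ (fun y ↦ fderiv ℝ Ψ y (v i)) x (v i) = k x + fderiv ℝ k x (⟪v i, x⟫_ℝ • v i) := by
    have hΨi : (fun y ↦ fderiv ℝ Ψ y (v i)) = fun y ↦ k y * innerSL ℝ (v i) y :=
      funext fun y ↦ by simp [(hΨk y).fderiv, real_inner_comm]
    rw [hΨi, fderiv_fun_mul hk (innerSL ℝ (v i)).differentiableAt, (innerSL ℝ (v i)).fderiv]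
    simp
  rw [laplacian_eq_sum_fderiv_fderiv_apply v hΨ.contDiffAt,
    Finset.sum_congr rfl fun i _ ↦ hsummand i, Finset.sum_add_distrib, ← map_sum, v.sum_repr']
  simp

end Laplacian

section Convolution

variable {𝕜 E F E' F' : Type*} [RCLike 𝕜] [NormedAddCommGroup E] [NormedSpace 𝕜 E]
  [MeasurableSpace E] [BorelSpace E] [NormedAddCommGroup E'] [NormedSpace 𝕜 E']
  [NormedAddCommGroup F] [NormedSpace 𝕜 F] [NormedAddCommGroup F'] [NormedSpace ℝ F']
  [NormedSpace 𝕜 F'] {μ : Measure E} (L : F →L[𝕜] E' →L[𝕜] F') {f : E → F}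

lemma fderiv_convolution_right_apply [SFinite μ] [μ.IsAddLeftInvariant] {k : E → E'}
    (hf : LocallyIntegrable f μ) (hk : ContDiff 𝕜 1 k) (hkc : HasCompactSupport k) (x v : E) :
    fderiv 𝕜 (f ⋆[L, μ] k) x v = (f ⋆[L, μ] fun y ↦ fderiv 𝕜 k y v) x := by
  rw [(hkc.hasFDerivAt_convolution_right L hf hk x).fderiv]
  exact convolution_precompR_apply L hf (hkc.fderiv 𝕜) (hk.continuous_fderiv one_ne_zero) x v

lemma hasDerivAt_convolution_right_of_param {k : 𝕜 → E → E'} {s : Set 𝕜} {K : Set E}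
    (hs : IsOpen s) (hK : IsCompact K) (hkK : ∀ t, ∀ y, t ∈ s → y ∉ K → k t y = 0)
    (hf : LocallyIntegrable f μ) (hk : ContDiffOn 𝕜 1 ↿k (s ×ˢ univ)) {t : 𝕜} (ht : t ∈ s)
    (x : E) :
    HasDerivAt (fun t ↦ (f ⋆[L, μ] k t) x) ((f ⋆[L, μ] fun y ↦ deriv (fun t ↦ k t y) t) x) t := by
  have hopen : IsOpen (s ×ˢ univ : Set (𝕜 × E)) := hs.prod isOpen_univ
  have hcont : Continuous fun y ↦ fderiv 𝕜 ↿k (t, y) :=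
    (hk.continuousOn_fderiv_of_isOpen hopen le_rfl).comp_continuous (.prodMk_right t) fun _ ↦
      ⟨ht, mem_univ _⟩
  have hsupp : HasCompactSupport fun y ↦ fderiv 𝕜 ↿k (t, y) := by
    refine .intro hK fun y hy ↦ ?_
    have h0 : ↿k =ᶠ[𝓝 (t, y)] fun _ ↦ 0 := by
      filter_upwards [(hs.prod hK.isClosed.isOpen_compl).mem_nhds ⟨ht, hy⟩] with p hp
      exact hkK p.1 p.2 hp.1 hp.2
    simp [h0.fderiv_eq]
  have hslice (y : E) : deriv (fun t ↦ k t y) t = fderiv 𝕜 ↿k (t, y) (1, 0) := by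
    have hkd : DifferentiableAt 𝕜 ↿k (t, y) :=
      (hk.differentiableOn one_ne_zero).differentiableAt (hopen.mem_nhds ⟨ht, mem_univ y⟩)
    exact (hkd.hasFDerivAt.comp_hasDerivAt t
      ((hasDerivAt_id t).prodMk (hasDerivAt_const t y))).deriv
  simp_rw [hslice, ← convolution_precompR_apply L hf hsupp hcont]
  exact (hasFDerivAt_convolution_right_with_param L hs hK hkK hf hk (t, x) ht).comp_hasDerivAt t
    ((hasDerivAt_id t).prodMk (hasDerivAt_const t x))

end Convolution

section ConvolutionLaplacian

variable {E F E' F' : Type*} [NormedAddCommGroup E] [InnerProductSpace ℝ E] [FiniteDimensional ℝ E]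
  [MeasurableSpace E] [BorelSpace E] [NormedAddCommGroup E'] [NormedSpace ℝ E']
  [NormedAddCommGroup F] [NormedSpace ℝ F] [NormedAddCommGroup F'] [NormedSpace ℝ F']
  {μ : Measure E} [SFinite μ] [μ.IsAddLeftInvariant] (L : F →L[ℝ] E' →L[ℝ] F')

lemma laplacian_convolution_right {f : E → F} {k : E → E'} (hf : LocallyIntegrable f μ)
    (hk : ContDiff ℝ 2 k) (hkc : HasCompactSupport k) (x : E) :
    Δ (f ⋆[L, μ] k) x = (f ⋆[L, μ] Δ k) x := by
  have hk' (v : E) : ContDiff ℝ 1 fun y ↦ fderiv ℝ k y v :=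
    (hk.fderiv_right (by norm_num)).clm_apply contDiff_const
  have hconv : ContDiff ℝ 2 (f ⋆[L, μ] k) := hkc.contDiff_convolution_right (n := 2) L hf hk
  rw [laplacian_eq_sum_fderiv_fderiv_apply (stdOrthonormalBasis ℝ E) hconv.contDiffAt]
  simp_rw [fderiv_convolution_right_apply L hf (hk.of_le one_le_two) hkc,
    fderiv_convolution_right_apply L hf (hk' _) (hkc.fderiv_apply ℝ _), convolution_def,
    laplacian_eq_sum_fderiv_fderiv_apply (stdOrthonormalBasis ℝ E) hk.contDiffAt, map_sum]
  refine (integral_finsetSum _ fun i _ ↦ ?_).symm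
  exact ((hkc.fderiv_apply ℝ _).fderiv_apply ℝ _).convolutionExists_right L hf
    (((hk' _).continuous_fderiv one_ne_zero).clm_apply continuous_const) x

end ConvolutionLaplacian

section Dilate

variable {E F : Type*} [NormedAddCommGroup E] [NormedSpace ℝ E] [NormedAddCommGroup F]
  [NormedSpace ℝ F]

/-- The dilation `x ↦ a ^ d • k (a • x)` of `k`, where `d` is the dimension of the space. For
`0 < a` it preserves the integral and shrinks the support by the factor `a`. -/
noncomputable def dilate (a : ℝ) (k : E → F) (x : E) : F :=
  a ^ finrank ℝ E • k (a • x)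

lemma hasDerivAt_dilate {k : E → F} {a : ℝ} (ha : a ≠ 0) {x : E}
    (hk : DifferentiableAt ℝ k (a • x)) :
    HasDerivAt (fun t ↦ dilate t k x)
      (a⁻¹ • dilate a (fun y ↦ (finrank ℝ E : ℝ) • k y + fderiv ℝ k y y) x) a := by
  have hline : HasDerivAt (fun t : ℝ ↦ t • x) x a := by
    simpa using (hasDerivAt_id a).smul_const x
  refine ((hasDerivAt_pow (finrank ℝ E) a).smul
    (hk.hasFDerivAt.comp_hasDerivAt a hline)).congr_deriv ?_
  simp only [dilate, map_smul, smul_add, smul_smul, comp_apply]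
  rw [add_comm]
  congr 2
  · rcases finrank ℝ E with _ | d
    · simp
    · simp only [pow_succ, add_tsub_cancel_right]
      field_simp
  · field_simp

lemma contDiff_dilate_uncurry {k : E → F} {n : WithTop ℕ∞} (hk : ContDiff ℝ n k) :
    ContDiff ℝ n ↿fun a : ℝ ↦ dilate a k :=
  (contDiff_fst.pow _).smul (hk.comp (contDiff_fst.smul contDiff_snd))

lemma contDiff_dilate {k : E → F} {n : WithTop ℕ∞} (hk : ContDiff ℝ n k) (a : ℝ) :
    ContDiff ℝ n (dilate a k) :=
  contDiff_const.smul (hk.comp (contDiff_const_smul a))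

lemma support_dilate_subset {k : E → F} {r : ℝ} (hk : support k ⊆ closedBall 0 r) {a : ℝ}
    (ha : 0 < a) : support (dilate a k) ⊆ closedBall 0 (r / a) := by
  intro x hx
  have hax : a • x ∈ closedBall 0 r := hk (right_ne_zero_of_smul hx)
  rw [mem_closedBall_zero_iff, norm_smul, Real.norm_of_nonneg ha.le] at hax
  rwa [mem_closedBall_zero_iff, le_div_iff₀' ha]

variable [FiniteDimensional ℝ E] [MeasurableSpace E] [BorelSpace E] (μ : Measure E)
  [μ.IsAddHaarMeasure]

lemma integral_dilate (k : E → F) {a : ℝ} (ha : 0 < a) :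
    ∫ x, dilate a k x ∂μ = ∫ x, k x ∂μ := by
  simp_rw [dilate, integral_smul, Measure.integral_comp_smul_of_nonneg μ k a (hR := ha.le)]
  exact smul_inv_smul₀ (pow_pos ha _).ne' _

variable {μ}

-- Lebesgue differentiation: the kernels `dilate a k` are bounded by a multiple of the normalised
-- indicator functions of the balls of radius `a⁻¹`.
lemma ae_tendsto_convolution_dilate [CompleteSpace F] {f : E → F} (hf : LocallyIntegrable f μ)
    {k : E → ℝ} {C : ℝ} (hkC : ∀ x, |k x| ≤ C) (hk : support k ⊆ closedBall 0 1)
    (hk1 : ∫ x, k x ∂μ = 1) :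
    ∀ᵐ x ∂μ, Tendsto (fun a ↦ (f ⋆[(lsmul ℝ ℝ).flip, μ] dilate a k) x) atTop (𝓝 (f x)) := by
  filter_upwards [(Besicovitch.vitaliFamily μ).ae_tendsto_average_norm_sub hf] with x hx
  have hball : Tendsto (fun a : ℝ ↦ ⨍ y in closedBall x a⁻¹, ‖f y - f x‖ ∂μ) atTop (𝓝 0) :=
    (hx.comp (Besicovitch.tendsto_filterAt μ x)).comp tendsto_inv_atTop_nhdsGT_zero
  refine tendsto_integral_smul_of_tendsto_average_norm_sub (C * μ.real (closedBall 0 1)) hball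
    (.of_forall fun a ↦ hf.integrableOn_isCompact (isCompact_closedBall x _))
    (tendsto_const_nhds.congr' ?_) ?_ ?_
  · filter_upwards [eventually_gt_atTop 0] with a ha
    rw [integral_sub_left_eq_self, integral_dilate μ k ha, hk1]
  · filter_upwards [eventually_gt_atTop 0] with a ha y hy
    simpa [dist_eq_norm, norm_sub_rev] using support_dilate_subset hk ha hy
  · filter_upwards [eventually_gt_atTop 0] with a ha y
    have hvol : 0 < μ.real (closedBall (0 : E) 1) :=
      ENNReal.toReal_pos (measure_closedBall_pos μ 0 one_pos).ne' measure_closedBall_lt_top.ne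
    rw [Measure.addHaar_real_closedBall' μ x (inv_pos.2 ha).le, mul_div_mul_right _ _ hvol.ne',
      inv_pow, div_inv_eq_mul, dilate, smul_eq_mul, abs_mul, abs_of_pos (pow_pos ha _), mul_comm]
    gcongr
    exact hkC _

end Dilate

section LaplacianDilate

variable {E F : Type*} [NormedAddCommGroup E] [InnerProductSpace ℝ E] [FiniteDimensional ℝ E]
  [NormedAddCommGroup F] [NormedSpace ℝ F]

lemma laplacian_dilate {k : E → F} (hk : ContDiff ℝ 2 k) (a : ℝ) (x : E) :
    Δ (dilate a k) x = a ^ 2 • dilate a (Δ k) x := by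
  have hk' : ContDiff ℝ 2 fun y ↦ k (a • y) := hk.comp (contDiff_const_smul a)
  have hscale : Δ (fun y ↦ k (a • y)) x = a ^ 2 • Δ k (a • x) := by
    simpa using laplacian_comp_const_add_smul hk a 0 x
  rw [dilate, smul_comm, ← hscale]
  exact InnerProductSpace.laplacian_smul _ hk'.contDiffAt

lemma hasDerivAt_dilate_of_hasFDerivAt_smul_innerSL {Ψ k : E → ℝ} (hΨ : ContDiff ℝ 2 Ψ)
    (hΨk : ∀ y, HasFDerivAt Ψ (k y • innerSL ℝ y) y) (hk : Differentiable ℝ k) {a : ℝ}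
    (ha : a ≠ 0) (x : E) :
    HasDerivAt (fun t ↦ dilate t k x) (a⁻¹ ^ 3 * Δ (dilate a Ψ) x) a := by
  refine (hasDerivAt_dilate ha hk.differentiableAt).congr_deriv ?_
  simp_rw [smul_eq_mul, ← laplacian_of_hasFDerivAt_smul_innerSL hΨ hΨk hk.differentiableAt]
  rw [laplacian_dilate hΨ, smul_eq_mul]
  field_simp

end LaplacianDilate

lemma hasDerivAt_expNegInvGlue (x : ℝ) :
    HasDerivAt expNegInvGlue (x⁻¹ ^ 2 * expNegInvGlue x) x := by
  simpa using expNegInvGlue.hasDerivAt_polynomial_eval_inv_mul 1 x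

lemma contDiff_inv_sq_mul_expNegInvGlue : ContDiff ℝ ∞ fun x ↦ x⁻¹ ^ 2 * expNegInvGlue x := by
  have h := expNegInvGlue.contDiff_polynomial_eval_inv_mul (n := ⊤) (.X ^ 2)
  simp only [Polynomial.eval_pow, Polynomial.eval_X] at h
  exact h

section RadialBump

/-- The radial bump `x ↦ h (1 - ‖x‖²)`, where `h` is the derivative of `expNegInvGlue`. -/
noncomputable def radialBump {E : Type*} [Norm E] (x : E) : ℝ :=
  (1 - ‖x‖ ^ 2)⁻¹ ^ 2 * expNegInvGlue (1 - ‖x‖ ^ 2)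

lemma support_expNegInvGlue_one_sub_norm_sq_subset {E : Type*} [SeminormedAddCommGroup E] :
    support (fun x : E ↦ expNegInvGlue (1 - ‖x‖ ^ 2)) ⊆ closedBall 0 1 := by
  intro x hx
  simpa using (not_le.1 (mt expNegInvGlue.zero_of_nonpos hx)).le

lemma support_radialBump_subset {E : Type*} [SeminormedAddCommGroup E] :
    support (radialBump : E → ℝ) ⊆ closedBall 0 1 :=
  (support_mul_subset_right _ _).trans support_expNegInvGlue_one_sub_norm_sq_subset

variable {E : Type*} [NormedAddCommGroup E] [InnerProductSpace ℝ E]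

lemma contDiff_radialBump : ContDiff ℝ ∞ (radialBump : E → ℝ) :=
  contDiff_inv_sq_mul_expNegInvGlue.comp (contDiff_const.sub (contDiff_id.norm_sq ℝ))

lemma hasFDerivAt_expNegInvGlue_one_sub_norm_sq (x : E) :
    HasFDerivAt (fun x : E ↦ expNegInvGlue (1 - ‖x‖ ^ 2))
      (-(2 * radialBump x) • innerSL ℝ x) x := by
  refine ((hasDerivAt_expNegInvGlue _).comp_hasFDerivAt x
    ((hasFDerivAt_id x).norm_sq.const_sub 1)).congr_fderiv ?_
  ext y
  simp [radialBump]
  ring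

lemma integral_radialBump_pos [FiniteDimensional ℝ E] [MeasurableSpace E] [BorelSpace E]
    (μ : Measure E) [IsFiniteMeasureOnCompacts μ] [μ.IsOpenPosMeasure] :
    0 < ∫ x, radialBump x ∂μ := by
  refine contDiff_radialBump.continuous.integral_pos_of_hasCompactSupport_nonneg_nonzero
    (.of_support_subset_isCompact (isCompact_closedBall 0 1) support_radialBump_subset)
    (fun x ↦ mul_nonneg (sq_nonneg _) (expNegInvGlue.nonneg _)) (x := 0) ?_
  simp [radialBump, (expNegInvGlue.pos_of_pos one_pos).ne']

end RadialBump

section GradientMollifier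

variable {E : Type*} [NormedAddCommGroup E] [InnerProductSpace ℝ E] [MeasurableSpace E]

/-- A mollifier of mass one supported in the unit ball, whose product with the identity vector
field has a compactly supported potential: `∇ potential x = kernel x • x`. Radial bumps are of
this kind. -/
structure GradientMollifier (μ : Measure E) where
  kernel : E → ℝ
  potential : E → ℝ
  contDiff_kernel : ContDiff ℝ ∞ kernel
  contDiff_potential : ContDiff ℝ ∞ potential
  support_kernel_subset : support kernel ⊆ closedBall 0 1
  support_potential_subset : support potential ⊆ closedBall 0 1
  integral_kernel : ∫ x, kernel x ∂μ = 1
  hasFDerivAt_potential : ∀ x, HasFDerivAt potential (kernel x • innerSL ℝ x) x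

/-- The normalised radial bump, with potential a multiple of `x ↦ expNegInvGlue (1 - ‖x‖²)`. -/
noncomputable def radialMollifier [FiniteDimensional ℝ E] [BorelSpace E] (μ : Measure E)
    [IsFiniteMeasureOnCompacts μ] [μ.IsOpenPosMeasure] : GradientMollifier μ where
  kernel x := (∫ y, radialBump y ∂μ)⁻¹ * radialBump x
  potential x := -(2 * ∫ y, radialBump y ∂μ)⁻¹ * expNegInvGlue (1 - ‖x‖ ^ 2)
  contDiff_kernel := contDiff_const.mul contDiff_radialBump
  contDiff_potential :=
    contDiff_const.mul (expNegInvGlue.contDiff.comp (contDiff_const.sub (contDiff_id.norm_sq ℝ)))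
  support_kernel_subset := (support_mul_subset_right _ _).trans support_radialBump_subset
  support_potential_subset :=
    (support_mul_subset_right _ _).trans support_expNegInvGlue_one_sub_norm_sq_subset
  integral_kernel := by
    rw [integral_const_mul, inv_mul_cancel₀ (integral_radialBump_pos μ).ne']
  hasFDerivAt_potential x := by
    refine ((hasFDerivAt_expNegInvGlue_one_sub_norm_sq x).const_mul _).congr_fderiv ?_
    rw [smul_smul]
    congr 1
    ring

end GradientMollifier

section WeaklyHarmonic

variable {E F : Type*} [NormedAddCommGroup E] [InnerProductSpace ℝ E] [FiniteDimensional ℝ E]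
  [MeasurableSpace E] [NormedAddCommGroup F] [NormedSpace ℝ F] {μ : Measure E} {f g : E → F}
  {U V : Set E} {x : E} {r : ℝ}

/-- `f` solves `Δ f = 0` on `U` in the sense of distributions. Local integrability of `f` is not
part of the definition. -/
def WeaklyHarmonicOn (f : E → F) (U : Set E) (μ : Measure E) : Prop :=
  ∀ φ : E → ℝ, ContDiff ℝ ∞ φ → HasCompactSupport φ → tsupport φ ⊆ U →
    ∫ y in U, Δ φ y • f y ∂μ = 0

lemma setIntegral_laplacian_smul_eq_integral {φ : E → ℝ} (hφ : tsupport φ ⊆ U) :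
    ∫ y in U, Δ φ y • f y ∂μ = ∫ y, Δ φ y • f y ∂μ :=
  setIntegral_eq_integral_of_forall_compl_eq_zero fun y hy ↦ by
    rw [notMem_support.1 fun h ↦ hy (hφ (support_laplacian_subset φ h)), zero_smul]

namespace WeaklyHarmonicOn

lemma mono (hf : WeaklyHarmonicOn f U μ) (hVU : V ⊆ U) : WeaklyHarmonicOn f V μ := by
  intro φ hφ hφc hφV
  rw [setIntegral_laplacian_smul_eq_integral hφV,
    ← setIntegral_laplacian_smul_eq_integral (hφV.trans hVU)]
  exact hf φ hφ hφc (hφV.trans hVU)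

lemma congr (hf : WeaklyHarmonicOn f U μ) (hU : MeasurableSet U) (hfg : EqOn f g U) :
    WeaklyHarmonicOn g U μ := by
  intro φ hφ hφc hφU
  rw [← hf φ hφ hφc hφU]
  exact setIntegral_congr_fun hU fun y hy ↦ by simp only [hfg hy]

lemma convolution_laplacian_eq_zero (hf : WeaklyHarmonicOn f U μ) (hxU : closedBall x r ⊆ U)
    {φ : E → ℝ} (hφ : ContDiff ℝ ∞ φ) (hφr : support φ ⊆ closedBall 0 r) :
    (f ⋆[(lsmul ℝ ℝ).flip, μ] Δ φ) x = 0 := by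
  let ψ : E → ℝ := fun y ↦ φ (x + (-1 : ℝ) • y)
  have hψ : ContDiff ℝ ∞ ψ := hφ.comp (contDiff_const.add (contDiff_const_smul (-1)))
  have hψr : support ψ ⊆ closedBall x r := fun y hy ↦ by
    simpa [dist_eq_norm, norm_sub_rev, ← sub_eq_add_neg] using hφr hy
  have hψU : tsupport ψ ⊆ U := (closure_minimal hψr isClosed_closedBall).trans hxU
  have hΔψ (y : E) : Δ ψ y = Δ φ (x - y) := by
    rw [laplacian_comp_const_add_smul (hφ.of_le ENat.LEInfty.out)]
    simp [← sub_eq_add_neg]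
  change ∫ y, Δ φ (x - y) • f y ∂μ = 0
  simp_rw [← hΔψ]
  rw [← setIntegral_laplacian_smul_eq_integral hψU]
  exact hf ψ hψ (.of_support_subset_isCompact (isCompact_closedBall x r) hψr) hψU

variable [BorelSpace E]

lemma hasDerivAt_convolution_dilate (hf : WeaklyHarmonicOn f U μ) (hfi : LocallyIntegrable f μ)
    (hr : 0 < r) (hxU : closedBall x r ⊆ U) (ρ : GradientMollifier μ) {a : ℝ} (ha : r⁻¹ < a) :
    HasDerivAt (fun t ↦ (f ⋆[(lsmul ℝ ℝ).flip, μ] dilate t ρ.kernel) x) 0 a := by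
  have hsupp {k : E → ℝ} (hk : support k ⊆ closedBall 0 1) {t : ℝ} (ht : r⁻¹ < t) :
      support (dilate t k) ⊆ closedBall 0 r := by
    have ht0 : 0 < t := (inv_pos.2 hr).trans ht
    refine (support_dilate_subset hk ht0).trans (closedBall_subset_closedBall ?_)
    simpa using inv_le_of_inv_le₀ hr ht.le
  have hderiv : (fun y ↦ deriv (fun t ↦ dilate t ρ.kernel y) a) =
      a⁻¹ ^ 3 • Δ (dilate a ρ.potential) := funext fun y ↦
    (hasDerivAt_dilate_of_hasFDerivAt_smul_innerSL (ρ.contDiff_potential.of_le ENat.LEInfty.out)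
      ρ.hasFDerivAt_potential (ρ.contDiff_kernel.differentiable (by simp))
      ((inv_pos.2 hr).trans ha).ne' y).deriv
  refine (hasDerivAt_convolution_right_of_param _ isOpen_Ioi (isCompact_closedBall 0 r)
    (fun t y ht hy ↦ notMem_support.1 fun h ↦ hy (hsupp ρ.support_kernel_subset ht h)) hfi
    ((contDiff_dilate_uncurry ρ.contDiff_kernel).of_le ENat.LEInfty.out).contDiffOn ha
    x).congr_deriv ?_
  rw [hderiv, convolution_smul, Pi.smul_apply, hf.convolution_laplacian_eq_zero hxU
    (contDiff_dilate ρ.contDiff_potential a) (hsupp ρ.support_potential_subset ha), smul_zero]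

variable [μ.IsAddHaarMeasure]

lemma laplacian_convolution_eq_zero (hf : WeaklyHarmonicOn f U μ) (hfi : LocallyIntegrable f μ)
    (hxU : closedBall x r ⊆ U) {φ : E → ℝ} (hφ : ContDiff ℝ ∞ φ)
    (hφr : support φ ⊆ closedBall 0 r) :
    Δ (f ⋆[(lsmul ℝ ℝ).flip, μ] φ) x = 0 := by
  rw [laplacian_convolution_right _ hfi (hφ.of_le ENat.LEInfty.out)
    (.of_support_subset_isCompact (isCompact_closedBall 0 r) hφr)]
  exact hf.convolution_laplacian_eq_zero hxU hφ hφr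

variable [CompleteSpace F]

lemma ae_eq_convolution_dilate (hf : WeaklyHarmonicOn f U μ) (hfi : LocallyIntegrable f μ)
    (hr : 0 < r) (ρ : GradientMollifier μ) {a : ℝ} (ha : r⁻¹ < a) :
    ∀ᵐ x ∂μ, closedBall x r ⊆ U → f x = (f ⋆[(lsmul ℝ ℝ).flip, μ] dilate a ρ.kernel) x := by
  obtain ⟨C, hC⟩ := ρ.contDiff_kernel.continuous.bounded_above_of_compact_support
    (.of_support_subset_isCompact (isCompact_closedBall 0 1) ρ.support_kernel_subset)
  filter_upwards [ae_tendsto_convolution_dilate hfi hC ρ.support_kernel_subset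
    ρ.integral_kernel] with x hx hxU
  have hderiv {t : ℝ} (ht : r⁻¹ < t) := hf.hasDerivAt_convolution_dilate hfi hr hxU ρ ht
  refine tendsto_nhds_unique hx (tendsto_const_nhds.congr' ?_)
  filter_upwards [eventually_gt_atTop r⁻¹] with t ht
  exact isOpen_Ioi.is_const_of_deriv_eq_zero isPreconnected_Ioi
    (fun s hs ↦ (hderiv hs).differentiableAt.differentiableWithinAt)
    (fun s hs ↦ (hderiv hs).deriv) ha ht

lemma exists_harmonicOnNhd_ball (hf : WeaklyHarmonicOn f (ball x (2 * r)) μ)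
    (hfi : LocallyIntegrable f μ) (hr : 0 < r) :
    ∃ u : E → F, ContDiff ℝ ∞ u ∧ InnerProductSpace.HarmonicOnNhd u (ball x r) ∧
      f =ᵐ[μ.restrict (ball x r)] u := by
  let ρ := radialMollifier μ
  have ha : r⁻¹ < 2 / r := by rw [inv_eq_one_div]; gcongr; norm_num
  have hball {y : E} (hy : y ∈ ball x r) : closedBall y r ⊆ ball x (2 * r) :=
    closedBall_subset_ball' (by rw [mem_ball] at hy; linarith)
  have hk : ContDiff ℝ ∞ (dilate (2 / r) ρ.kernel) := contDiff_dilate ρ.contDiff_kernel _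
  have hkr : support (dilate (2 / r) ρ.kernel) ⊆ closedBall 0 r :=
    (support_dilate_subset ρ.support_kernel_subset (by positivity)).trans
      (closedBall_subset_closedBall (by rw [one_div_div]; linarith))
  have hu : ContDiff ℝ ∞ (f ⋆[(lsmul ℝ ℝ).flip, μ] dilate (2 / r) ρ.kernel) :=
    HasCompactSupport.contDiff_convolution_right (n := ⊤) _
      (.of_support_subset_isCompact (isCompact_closedBall 0 r) hkr) hfi hk
  refine ⟨_, hu, fun y hy ↦ ⟨(hu.of_le ENat.LEInfty.out).contDiffAt, ?_⟩, ?_⟩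
  · filter_upwards [isOpen_ball.mem_nhds hy] with z hz
    exact hf.laplacian_convolution_eq_zero hfi (hball hz) hk hkr
  · rw [EventuallyEq, ae_restrict_iff' measurableSet_ball]
    filter_upwards [hf.ae_eq_convolution_dilate hfi hr ρ ha] with y hy hyx
    exact hy (hball hyx)

lemma exists_harmonicOnNhd_ball_of_closedBall_subset (hf : WeaklyHarmonicOn f U μ)
    (hfi : LocallyIntegrableOn f U μ) (hr : 0 < r) (hxU : closedBall x (2 * r) ⊆ U) :
    ∃ u : E → F, ContDiff ℝ ∞ u ∧ InnerProductSpace.HarmonicOnNhd u (ball x r) ∧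
      f =ᵐ[μ.restrict (ball x r)] u := by
  have heq : EqOn f ((closedBall x (2 * r)).indicator f) (ball x (2 * r)) := fun y hy ↦
    (indicator_of_mem (ball_subset_closedBall hy) f).symm
  have hint : Integrable ((closedBall x (2 * r)).indicator f) μ :=
    (hfi.integrableOn_compact_subset hxU (isCompact_closedBall _ _)).integrable_indicator
      measurableSet_closedBall
  obtain ⟨u, hu, huh, hae⟩ := ((hf.mono (ball_subset_closedBall.trans hxU)).congr
    measurableSet_ball heq).exists_harmonicOnNhd_ball hint.locallyIntegrable hr
  refine ⟨u, hu, huh, EventuallyEq.trans ?_ hae⟩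
  filter_upwards [ae_restrict_mem measurableSet_ball] with y hy
  exact heq (ball_subset_ball (by linarith) hy)

end WeaklyHarmonicOn

end WeaklyHarmonic

lemma exists_eqOn_and_ae_eq_of_forall_ae_eq {X Y : Type*} [TopologicalSpace X]
    [SecondCountableTopology X] [MeasurableSpace X] [OpensMeasurableSpace X] [TopologicalSpace Y]
    [T2Space Y] {μ : Measure X} [μ.IsOpenPosMeasure] {f : X → Y} {G : Set X} {V : X → Set X}
    {u : X → X → Y} (hG : MeasurableSet G) (hV : ∀ x ∈ G, IsOpen (V x))
    (hxV : ∀ x ∈ G, x ∈ V x) (hu : ∀ x ∈ G, ContinuousOn (u x) (V x))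
    (hfu : ∀ x ∈ G, f =ᵐ[μ.restrict (V x)] u x) :
    ∃ w : X → Y, (∀ x ∈ G, EqOn w (u x) (V x ∩ G)) ∧ f =ᵐ[μ.restrict G] w := by
  have heq : ∀ x ∈ G, EqOn (fun y ↦ u y y) (u x) (V x ∩ G) := by
    intro x hx y ⟨hyx, hy⟩
    have hae : u y =ᵐ[μ.restrict (V y ∩ V x)] u x := by
      filter_upwards [ae_restrict_of_ae_restrict_of_subset inter_subset_left (hfu y hy),
        ae_restrict_of_ae_restrict_of_subset inter_subset_right (hfu x hx)] with z hzy hzx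
      exact hzy.symm.trans hzx
    exact Measure.eqOn_open_of_ae_eq hae ((hV y hy).inter (hV x hx))
      ((hu y hy).mono inter_subset_left) ((hu x hx).mono inter_subset_right) ⟨hxV y hy, hyx⟩
  refine ⟨fun y ↦ u y y, heq, ?_⟩
  rw [EventuallyEq, ae_restrict_iff' hG]
  refine measure_null_of_locally_null _ fun x hx ↦ ?_
  have hxG : x ∈ G := (Classical.not_imp.1 hx).1
  refine ⟨_, inter_mem_nhdsWithin _ ((hV x hxG).mem_nhds (hxV x hxG)),
    measure_mono_null ?_ ((ae_restrict_iff' (hV x hxG).measurableSet).1 (hfu x hxG))⟩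
  rintro y ⟨hy, hyx⟩
  obtain ⟨hyG, hne⟩ := Classical.not_imp.1 hy
  exact Classical.not_imp.2 ⟨hyx, fun h ↦ hne (h.trans (heq x hxG ⟨hyx, hyG⟩).symm)⟩

theorem weyl_lemma_general {E F : Type*} [NormedAddCommGroup E] [InnerProductSpace ℝ E]
    [FiniteDimensional ℝ E] [MeasurableSpace E] [BorelSpace E] [NormedAddCommGroup F]
    [NormedSpace ℝ F] [CompleteSpace F] {μ : Measure E} [μ.IsAddHaarMeasure] {f : E → F}
    {G : Set E} (hG : IsOpen G) (hfi : LocallyIntegrableOn f G μ)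
    (hf : WeaklyHarmonicOn f G μ) :
    ∃ w : E → F, ContDiffOn ℝ ∞ w G ∧ InnerProductSpace.HarmonicOnNhd w G ∧
      f =ᵐ[μ.restrict G] w := by
  have hlocal : ∀ x ∈ G, ∃ r : ℝ, ∃ u : E → F, 0 < r ∧ ContDiff ℝ ∞ u ∧
      InnerProductSpace.HarmonicOnNhd u (ball x r) ∧ f =ᵐ[μ.restrict (ball x r)] u := by
    intro x hx
    obtain ⟨r, hr, hrG⟩ := nhds_basis_closedBall.mem_iff.1 (hG.mem_nhds hx)
    obtain ⟨u, hu⟩ := hf.exists_harmonicOnNhd_ball_of_closedBall_subset (x := x) hfi (half_pos hr)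
      (by rwa [mul_div_cancel₀ r two_ne_zero])
    exact ⟨r / 2, u, half_pos hr, hu⟩
  choose! r u hr hu huh hfu using hlocal
  obtain ⟨w, hwu, hfw⟩ := exists_eqOn_and_ae_eq_of_forall_ae_eq hG.measurableSet
    (fun x _ ↦ isOpen_ball) (fun x hx ↦ mem_ball_self (hr x hx))
    (fun x hx ↦ (hu x hx).continuous.continuousOn) hfu
  have hwu' : ∀ x ∈ G, w =ᶠ[𝓝 x] u x := fun x hx ↦
    (hwu x hx).eventuallyEq_of_mem (inter_mem (ball_mem_nhds x (hr x hx)) (hG.mem_nhds hx))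
  exact ⟨w, fun x hx ↦ ((hu x hx).contDiffAt.congr_of_eventuallyEq (hwu' x hx)).contDiffWithinAt,
    fun x hx ↦ (InnerProductSpace.harmonicAt_congr_nhds (hwu' x hx)).2
      (huh x hx x (mem_ball_self (hr x hx))), hfw⟩

lemma euclLaplacian_eq_laplacian {d : ℕ} (f : EuclideanSpace ℝ (Fin d) → ℝ) :
    euclLaplacian f = Δ f := by
  rw [InnerProductSpace.laplacian_eq_iteratedFDeriv_orthonormalBasis f
    (EuclideanSpace.basisFun _ ℝ)]
  simp [funext_iff, euclLaplacian]

/-- Weyl's lemma: a locally integrable distributional solution of `Δf = 0` on an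
open set `G` has a smooth harmonic version. -/
theorem weyl_lemma {d : ℕ} (G : Set (EuclideanSpace ℝ (Fin d))) (hG : IsOpen G)
    (f : EuclideanSpace ℝ (Fin d) → ℝ)
    (hf : LocallyIntegrableOn f G volume)
    (hweak : ∀ φ : EuclideanSpace ℝ (Fin d) → ℝ,
      ContDiff ℝ (⊤ : ℕ∞) φ → HasCompactSupport φ → tsupport φ ⊆ G →
      ∫ y in G, f y * euclLaplacian φ y = 0) :
    ∃ ftilde : EuclideanSpace ℝ (Fin d) → ℝ,
      ContDiffOn ℝ (⊤ : ℕ∞) ftilde G ∧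
      (∀ x ∈ G, euclLaplacian ftilde x = 0) ∧
      ∀ᵐ x ∂(volume.restrict G), f x = ftilde x := by
  simp only [euclLaplacian_eq_laplacian, mul_comm (f _)] at hweak ⊢
  obtain ⟨w, hw, hwh, hfw⟩ := weyl_lemma_general hG hf hweak
  exact ⟨w, hw, fun x hx ↦ (hwh x hx).2.eq_of_nhds, hfw⟩
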